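/- arXiv:1804.00542 — 8 statements merged into one kernel-verified Lean document; each statement's English description precedes it below -/
import Mathlib

section
/- For all positive real numbers x and y, the product of the arithmetic mean and the geometric mean of x and y is at least the product of the quadratic mean and the harmonic mean of x and y; that is, ((x+y)/2) · √(xy) ≥ √((x²+y²)/2) · (2xy/(x+y)). -/
/-! Write `H`, `G`, `A`, `Q` for the harmonic, geometric, arithmetic and quadratic means. Since
`Q² + G² = 2A²`, AM-GM applied to `Q²` and `G²` gives `QG ≤ A²`. As `H = G² / A`, it follows that
`QH = (QG)G / A ≤ AG`. -/

theorem sqrt_mul_le_half_add {a b : ℝ} (ha : 0 ≤ a) (hb : 0 ≤ b) :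
    √(a * b) ≤ (a + b) / 2 := by
  lift a to NNReal using ha
  lift b to NNReal using hb
  have am_gm := NNReal.coe_le_coe.mpr (NNReal.sqrt_mul_le_half_add a b)
  rwa [Real.coe_sqrt] at am_gm

theorem quadratic_mean_mul_geom_mean_le_sq_arith_mean {x y : ℝ} (hxy : 0 ≤ x * y) :
    √((x ^ 2 + y ^ 2) / 2) * √(x * y) ≤ ((x + y) / 2) ^ 2 :=
  calc √((x ^ 2 + y ^ 2) / 2) * √(x * y)
    _ = √((x ^ 2 + y ^ 2) / 2 * (x * y)) := (Real.sqrt_mul (by positivity) _).symm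
    _ ≤ ((x ^ 2 + y ^ 2) / 2 + x * y) / 2 := sqrt_mul_le_half_add (by positivity) hxy
    _ = ((x + y) / 2) ^ 2 := by ring

theorem harm_mean_eq_sq_geom_mean_div_arith_mean {x y : ℝ} (hxy : 0 ≤ x * y) :
    2 * x * y / (x + y) = √(x * y) ^ 2 / ((x + y) / 2) := by
  rw [Real.sq_sqrt hxy, div_div_eq_mul_div]
  ring

theorem AG_ge_QH (x y : ℝ) (hx : 0 < x) (hy : 0 < y) :
    ((x + y) / 2) * Real.sqrt (x * y) ≥
      Real.sqrt ((x ^ 2 + y ^ 2) / 2) * (2 * x * y / (x + y)) := by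
  have hxy : 0 ≤ x * y := by positivity
  have arith_mean_pos : 0 < (x + y) / 2 := by positivity
  rw [ge_iff_le, harm_mean_eq_sq_geom_mean_div_arith_mean hxy, ← mul_div_assoc,
    div_le_iff₀ arith_mean_pos]
  calc √((x ^ 2 + y ^ 2) / 2) * √(x * y) ^ 2
    _ = √((x ^ 2 + y ^ 2) / 2) * √(x * y) * √(x * y) := by ring
    _ ≤ ((x + y) / 2) ^ 2 * √(x * y) := by
      gcongr
      exact quadratic_mean_mul_geom_mean_le_sq_arith_mean hxy
    _ = (x + y) / 2 * √(x * y) * ((x + y) / 2) := by ring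
end

section
/- For all positive real numbers x and y, equality A·G = Q·H holds if and only if x = y, where A = (x+y)/2, G = √(xy), Q = √((x²+y²)/2), and H = 2xy/(x+y). -/
/-!
Write `A`, `G`, `Q`, `H` for the four means. Since `A * H = G ^ 2`, multiplying `A * G = Q * H` by
`A` and cancelling `G` turns it into `A ^ 2 = Q * G`. As `A ^ 2` is the arithmetic mean of `Q ^ 2`
and `G ^ 2`, this is the equality case of AM-GM, so it means `Q = G`, that is, `x = y`.
-/

/-- The arithmetic mean `A` of two real numbers. -/
noncomputable def arithMean (x y : ℝ) : ℝ := (x + y) / 2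

/-- The geometric mean `G` of two real numbers of the same sign; the value is nonnegative even if
both numbers are negative, and it is `0` if the signs differ. -/
noncomputable def geomMean (x y : ℝ) : ℝ := Real.sqrt (x * y)

/-- The quadratic mean `Q` of two real numbers. -/
noncomputable def quadMean (x y : ℝ) : ℝ := Real.sqrt ((x ^ 2 + y ^ 2) / 2)

/-- The harmonic mean `H` of two real numbers, written without reciprocals of `x` and `y`; the
value is `0` if `x + y = 0`. -/
noncomputable def harmMean (x y : ℝ) : ℝ := 2 * x * y / (x + y)

section Means

variable {x y : ℝ}

theorem arithMean_ne_zero (hxy : 0 < x * y) : arithMean x y ≠ 0 := by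
  have hsq : 0 < (x + y) ^ 2 := by nlinarith [sq_nonneg x, sq_nonneg y]
  exact div_ne_zero (pow_ne_zero_iff two_ne_zero |>.mp hsq.ne') two_ne_zero

theorem geomMean_pos (hxy : 0 < x * y) : 0 < geomMean x y :=
  Real.sqrt_pos.mpr hxy

theorem geomMean_sq (hxy : 0 ≤ x * y) : geomMean x y ^ 2 = x * y :=
  Real.sq_sqrt hxy

theorem quadMean_sq (x y : ℝ) : quadMean x y ^ 2 = (x ^ 2 + y ^ 2) / 2 :=
  Real.sq_sqrt (by positivity)

theorem arithMean_mul_harmMean (hA : arithMean x y ≠ 0) :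
    arithMean x y * harmMean x y = x * y := by
  have hsum : x + y ≠ 0 := (div_ne_zero_iff.mp hA).1
  rw [arithMean, harmMean]
  field_simp

theorem quadMean_sq_add_geomMean_sq (hxy : 0 ≤ x * y) :
    quadMean x y ^ 2 + geomMean x y ^ 2 = 2 * arithMean x y ^ 2 := by
  rw [quadMean_sq, geomMean_sq hxy, arithMean]
  ring

theorem quadMean_eq_geomMean_iff (hxy : 0 ≤ x * y) : quadMean x y = geomMean x y ↔ x = y :=
  calc quadMean x y = geomMean x y
    _ ↔ (x ^ 2 + y ^ 2) / 2 = x * y := Real.sqrt_inj (by positivity) hxy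
    _ ↔ (x - y) ^ 2 = 0 := by constructor <;> intro h <;> linarith
    _ ↔ x = y := by rw [sq_eq_zero_iff, sub_eq_zero]

theorem arithMean_sq_eq_quadMean_mul_geomMean_iff (hxy : 0 ≤ x * y) :
    arithMean x y ^ 2 = quadMean x y * geomMean x y ↔ quadMean x y = geomMean x y := by
  have hsq : (quadMean x y - geomMean x y) ^ 2 =
      2 * (arithMean x y ^ 2 - quadMean x y * geomMean x y) := by
    linear_combination quadMean_sq_add_geomMean_sq hxy
  rw [← sub_eq_zero (a := quadMean x y), ← sq_eq_zero_iff, hsq,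
    mul_eq_zero_iff_left two_ne_zero, sub_eq_zero]

theorem arithMean_mul_geomMean_eq_quadMean_mul_harmMean_iff (hxy : 0 < x * y) :
    arithMean x y * geomMean x y = quadMean x y * harmMean x y ↔
      arithMean x y ^ 2 = quadMean x y * geomMean x y := by
  have hA := arithMean_ne_zero hxy
  have hAH : arithMean x y * harmMean x y = geomMean x y ^ 2 :=
    (arithMean_mul_harmMean hA).trans (geomMean_sq hxy.le).symm
  have hleft : arithMean x y * (arithMean x y * geomMean x y) =
      arithMean x y ^ 2 * geomMean x y := by ring
  have hright : arithMean x y * (quadMean x y * harmMean x y) =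
      quadMean x y * geomMean x y * geomMean x y := by
    linear_combination quadMean x y * hAH
  rw [← mul_right_inj' hA, hleft, hright, mul_left_inj' (geomMean_pos hxy).ne']

theorem AG_eq_QH_iff_general (hxy : 0 < x * y) :
    arithMean x y * geomMean x y = quadMean x y * harmMean x y ↔ x = y :=
  calc arithMean x y * geomMean x y = quadMean x y * harmMean x y
    _ ↔ arithMean x y ^ 2 = quadMean x y * geomMean x y :=
      arithMean_mul_geomMean_eq_quadMean_mul_harmMean_iff hxy
    _ ↔ quadMean x y = geomMean x y := arithMean_sq_eq_quadMean_mul_geomMean_iff hxy.le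
    _ ↔ x = y := quadMean_eq_geomMean_iff hxy.le

end Means

theorem AG_eq_QH_iff (x y : ℝ) (hx : 0 < x) (hy : 0 < y) :
    ((x + y) / 2) * Real.sqrt (x * y) =
      Real.sqrt ((x ^ 2 + y ^ 2) / 2) * (2 * x * y / (x + y)) ↔ x = y :=
  AG_eq_QH_iff_general (mul_pos hx hy)
end

section
/- For all positive real numbers x and y and every nonzero integer n, equality Aⁿ + Gⁿ = Qⁿ + Hⁿ holds if and only if x = y, where A = (x+y)/2, G = √(xy), Q = √((x²+y²)/2), and H = 2xy/(x+y). -/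
/-!
The four means satisfy `A * H = G ^ 2` and `G ^ 2 + Q ^ 2 = 2 * A ^ 2`. Let `a, g, q, h` be their
`p`-th powers; the first relation gives `a * h = g ^ 2`. If `1 ≤ p`, convexity of `t ↦ t ^ p` turns
the second into `2 * a ^ 2 ≤ q ^ 2 + g ^ 2`, so that the inequality `a + g < q + h` needs to be
proved only under the relations available for `p = 1`. If `p < 0`, then `Q * G ≤ A ^ 2` gives
`a ^ 2 ≤ q * g`, which again forces `a + g < q + h`. For `0 < p < 1` the difference
`(Q ^ p + H ^ p) - (A ^ p + G ^ p)` is negative near the diagonal and positive for `x / y` small,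
so equality does occur at some `x ≠ y`.
-/

section OrderedRing

variable {R : Type*} [CommRing R] [LinearOrder R] [IsStrictOrderedRing R] {a g h q : R}

theorem add_lt_add_of_mul_eq_sq_of_two_mul_sq_le (hg : 0 ≤ g) (hga : g < a) (hq : 0 ≤ q)
    (hah : a * h = g ^ 2) (hsq : 2 * a ^ 2 ≤ q ^ 2 + g ^ 2) : a + g < q + h := by
  have ha : 0 < a := hg.trans_lt hga
  have hgap : 0 < (a - g) ^ 3 * (a + g) :=
    mul_pos (pow_pos (sub_pos.2 hga) 3) (add_pos_of_pos_of_nonneg ha hg)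
  have hlt : a ^ 2 + a * g - g ^ 2 < a * q := by
    refine lt_of_pow_lt_pow_left₀ 2 (mul_nonneg ha.le hq) ?_
    calc (a ^ 2 + a * g - g ^ 2) ^ 2
        = a ^ 2 * (2 * a ^ 2 - g ^ 2) - (a - g) ^ 3 * (a + g) := by ring
      _ < a ^ 2 * (2 * a ^ 2 - g ^ 2) := sub_lt_self _ hgap
      _ ≤ a ^ 2 * q ^ 2 := mul_le_mul_of_nonneg_left (sub_le_iff_le_add.2 hsq) (sq_nonneg a)
      _ = (a * q) ^ 2 := (mul_pow a q 2).symm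
  refine lt_of_mul_lt_mul_left ?_ ha.le
  linear_combination hlt - hah

theorem add_lt_add_of_mul_eq_sq_of_sq_le_mul (ha : 0 < a) (hg : 0 < g) (hag : a ≠ g)
    (hah : a * h = g ^ 2) (hqg : a ^ 2 ≤ q * g) : a + g < q + h := by
  have hgap : 0 < (a - g) ^ 2 * (a + g) :=
    mul_pos (sq_pos_of_ne_zero (sub_ne_zero.2 hag)) (add_pos ha hg)
  refine lt_of_mul_lt_mul_left ?_ (mul_pos ha hg).le
  calc a * g * (a + g) < a * g * (a + g) + (a - g) ^ 2 * (a + g) := lt_add_of_pos_right _ hgap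
    _ = a * a ^ 2 + g * g ^ 2 := by ring
    _ ≤ a * (q * g) + g * g ^ 2 := by gcongr
    _ = a * g * (q + h) := by linear_combination -g * hah

end OrderedRing

section Rpow

variable {A G Q H p : ℝ}

theorem rpow_mul_rpow_eq_rpow_sq (hA : 0 ≤ A) (hH : 0 ≤ H) (hG : 0 ≤ G) (hAH : A * H = G ^ 2) :
    A ^ p * H ^ p = (G ^ p) ^ 2 := by
  rw [← Real.mul_rpow hA hH, hAH, Real.rpow_pow_comm hG]

theorem two_mul_rpow_sq_le (hA : 0 ≤ A) (hG : 0 ≤ G) (hQ : 0 ≤ Q) (hp : 1 ≤ p)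
    (hsq : 2 * A ^ 2 ≤ Q ^ 2 + G ^ 2) : 2 * (A ^ p) ^ 2 ≤ (Q ^ p) ^ 2 + (G ^ p) ^ 2 := by
  have hmean : A ^ 2 ≤ 1 / 2 * Q ^ 2 + 1 / 2 * G ^ 2 := by linarith
  have hpow : (A ^ 2) ^ p ≤ 1 / 2 * (Q ^ 2) ^ p + 1 / 2 * (G ^ 2) ^ p :=
    calc (A ^ 2) ^ p ≤ (1 / 2 * Q ^ 2 + 1 / 2 * G ^ 2) ^ p :=
          Real.rpow_le_rpow (sq_nonneg A) hmean (by linarith)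
      _ ≤ 1 / 2 * (Q ^ 2) ^ p + 1 / 2 * (G ^ 2) ^ p :=
          (convexOn_rpow hp).2 (sq_nonneg Q) (sq_nonneg G) (by norm_num) (by norm_num)
            (by norm_num)
  rw [Real.rpow_pow_comm hA, Real.rpow_pow_comm hQ, Real.rpow_pow_comm hG]
  linarith

theorem rpow_add_rpow_lt_of_one_le (hG : 0 ≤ G) (hGA : G < A) (hQ : 0 ≤ Q) (hH : 0 ≤ H)
    (hAH : A * H = G ^ 2) (hsq : 2 * A ^ 2 ≤ Q ^ 2 + G ^ 2) (hp : 1 ≤ p) :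
    A ^ p + G ^ p < Q ^ p + H ^ p := by
  have hA : 0 ≤ A := hG.trans hGA.le
  exact add_lt_add_of_mul_eq_sq_of_two_mul_sq_le (Real.rpow_nonneg hG p)
    (Real.rpow_lt_rpow hG hGA (by linarith)) (Real.rpow_nonneg hQ p)
    (rpow_mul_rpow_eq_rpow_sq hA hH hG hAH) (two_mul_rpow_sq_le hA hG hQ hp hsq)

theorem rpow_add_rpow_lt_of_neg (hA : 0 < A) (hG : 0 < G) (hAG : A ≠ G) (hQ : 0 < Q)
    (hH : 0 ≤ H) (hAH : A * H = G ^ 2) (hQG : Q * G ≤ A ^ 2) (hp : p < 0) :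
    A ^ p + G ^ p < Q ^ p + H ^ p := by
  have hpow : (A ^ p) ^ 2 ≤ Q ^ p * G ^ p := by
    rw [Real.rpow_pow_comm hA.le, ← Real.mul_rpow hQ.le hG.le]
    exact Real.rpow_le_rpow_of_nonpos (mul_pos hQ hG) hQG hp.le
  exact add_lt_add_of_mul_eq_sq_of_sq_le_mul (Real.rpow_pos_of_pos hA p)
    (Real.rpow_pos_of_pos hG p) (mt (Real.rpow_left_inj hA.le hG.le hp.ne).1 hAG)
    (rpow_mul_rpow_eq_rpow_sq hA.le hH hG.le hAH) hpow

end Rpow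

section Means

variable {x y p : ℝ}

theorem sqrt_mul_lt_add_div_two (hx : 0 ≤ x) (hy : 0 ≤ y) (hxy : x ≠ y) :
    √(x * y) < (x + y) / 2 := by
  have hsum : 0 < x + y := (add_nonneg hx hy).lt_of_ne' (by grind)
  rw [Real.sqrt_lt' (half_pos hsum)]
  linarith [sq_pos_of_ne_zero (sub_ne_zero.2 hxy)]

theorem rpow_mean_add_rpow_mean_lt (hx : 0 < x) (hy : 0 < y) (hp : p < 0 ∨ 1 ≤ p)
    (hxy : x ≠ y) :
    ((x + y) / 2) ^ p + √(x * y) ^ p < √((x ^ 2 + y ^ 2) / 2) ^ p + (2 * x * y / (x + y)) ^ p := by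
  have hGA := sqrt_mul_lt_add_div_two hx.le hy.le hxy
  have hG_sq : √(x * y) ^ 2 = x * y := Real.sq_sqrt (by positivity)
  have hAH : (x + y) / 2 * (2 * x * y / (x + y)) = √(x * y) ^ 2 := by
    rw [hG_sq]
    field_simp
  have hQG_sq : √((x ^ 2 + y ^ 2) / 2) ^ 2 + √(x * y) ^ 2 = 2 * ((x + y) / 2) ^ 2 := by
    rw [hG_sq, Real.sq_sqrt (by positivity)]
    ring
  rcases hp with hp | hp
  · have hQG : √((x ^ 2 + y ^ 2) / 2) * √(x * y) ≤ ((x + y) / 2) ^ 2 := by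
      linarith [two_mul_le_add_sq √((x ^ 2 + y ^ 2) / 2) √(x * y)]
    exact rpow_add_rpow_lt_of_neg (by positivity) (by positivity) hGA.ne' (by positivity)
      (by positivity) hAH hQG hp
  · exact rpow_add_rpow_lt_of_one_le (by positivity) hGA (by positivity) (by positivity) hAH
      hQG_sq.ge hp

end Means

theorem pow_mean_eq_iff_general {x y p : ℝ} (hx : 0 < x) (hy : 0 < y) (hp : p < 0 ∨ 1 ≤ p) :
    ((x + y) / 2) ^ p + √(x * y) ^ p = √((x ^ 2 + y ^ 2) / 2) ^ p + (2 * x * y / (x + y)) ^ p ↔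
      x = y := by
  refine ⟨fun heq ↦ by_contra fun hxy ↦ (rpow_mean_add_rpow_mean_lt hx hy hp hxy).ne heq, ?_⟩
  rintro rfl
  have hG : √(x * x) = x := Real.sqrt_mul_self hx.le
  have hQ : √((x ^ 2 + x ^ 2) / 2) = x := by rw [add_self_div_two, Real.sqrt_sq hx.le]
  have hH : 2 * x * x / (x + x) = x := by rw [← two_mul, mul_div_cancel_left₀ x (by positivity)]
  rw [add_self_div_two, hG, hQ, hH]

theorem pow_mean_eq_iff (x y : ℝ) (hx : 0 < x) (hy : 0 < y) (n : ℤ) (hn : n ≠ 0) :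
    ((x + y) / 2) ^ n + Real.sqrt (x * y) ^ n =
      Real.sqrt ((x ^ 2 + y ^ 2) / 2) ^ n + (2 * x * y / (x + y)) ^ n ↔ x = y := by
  have hn' : (n : ℝ) < 0 ∨ 1 ≤ (n : ℝ) := by exact_mod_cast hn.lt_or_gt
  simpa only [Real.rpow_intCast] using pow_mean_eq_iff_general hx hy hn'
end

section
/- Let a, b, c, d be positive real numbers such that a + b ≤ c + d and ab ≥ cd. Then for every integer n, aⁿ + bⁿ ≤ cⁿ + dⁿ (integer powers, including negative exponents). -/
/-!
If `d ≤ c`, the hypotheses force `a` and `b` to lie in `[d, c]`. Since `b - d ≤ c - a` and the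
interval `[a, c]` lies to the right of `[d, b]` endpoint by endpoint, the factorization of
`x ^ m - y ^ m` by `x - y` gives `b ^ m - d ^ m ≤ c ^ m - a ^ m` for natural `m`. Negative exponents
reduce to natural ones through `x ^ (-m) + y ^ (-m) = (x ^ m + y ^ m) / (x * y) ^ m`.
-/

theorem pow_sub_pow_le_pow_sub_pow {R : Type*} [CommRing R] [PartialOrder R] [IsOrderedRing R]
    {a b c d : R} (hd : 0 ≤ d) (hdb : d ≤ b) (hda : d ≤ a) (hbc : b ≤ c)
    (hsub : b - d ≤ c - a) (m : ℕ) : b ^ m - d ^ m ≤ c ^ m - a ^ m := by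
  have hb : 0 ≤ b := hd.trans hdb
  have ha : 0 ≤ a := hd.trans hda
  have hc : 0 ≤ c := hb.trans hbc
  calc b ^ m - d ^ m
      = (∑ i ∈ Finset.range m, b ^ i * d ^ (m - 1 - i)) * (b - d) := (geom_sum₂_mul b d m).symm
    _ ≤ (∑ i ∈ Finset.range m, c ^ i * a ^ (m - 1 - i)) * (c - a) := by
        have : 0 ≤ b - d := sub_nonneg.2 hdb
        gcongr
    _ = c ^ m - a ^ m := geom_sum₂_mul c a m

theorem le_of_mul_le_mul_of_le_of_le {R : Type*} [CommSemiring R] [LinearOrder R]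
    [IsStrictOrderedRing R] {a b c d : R} (ha : 0 ≤ a) (hdc : d ≤ c) (hbc : b ≤ c)
    (hprod : c * d ≤ a * b) : d ≤ a := by
  by_contra! had
  have hc : 0 < c := ha.trans_lt (had.trans_le hdc)
  refine hprod.not_gt ?_
  calc a * b ≤ a * c := by gcongr
    _ < d * c := by gcongr
    _ = c * d := mul_comm d c

section OrderedRing

variable {R : Type*} [CommRing R] [LinearOrder R] [IsStrictOrderedRing R] {a b c d : R}

theorem le_of_add_le_add_of_mul_le_mul (hc : 0 ≤ c) (hdc : d ≤ c) (hsum : a + b ≤ c + d)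
    (hprod : c * d ≤ a * b) : a ≤ c := by
  by_contra! hca
  -- The quadratic `(t - a) * (t - b)` dominates `(t - c) * (t - d)` for `t ≥ 0`; take `t = c`.
  have hquad : 0 ≤ (c - a) * (c - b) := by
    linear_combination hprod + c * hsum
  have hcb : c ≤ b := sub_nonpos.1 (nonpos_of_mul_nonneg_right hquad (sub_neg.2 hca))
  linarith

theorem pow_add_pow_le_pow_add_pow (ha : 0 ≤ a) (hb : 0 ≤ b) (hc : 0 ≤ c) (hd : 0 ≤ d)
    (hsum : a + b ≤ c + d) (hprod : c * d ≤ a * b) (m : ℕ) :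
    a ^ m + b ^ m ≤ c ^ m + d ^ m := by
  wlog hdc : d ≤ c generalizing c d
  · rw [add_comm (c ^ m)]
    exact this hd hc (by rwa [add_comm d]) (by rwa [mul_comm d]) (le_of_not_ge hdc)
  have hsum' : b + a ≤ c + d := by rwa [add_comm b]
  have hprod' : c * d ≤ b * a := by rwa [mul_comm b]
  have hac : a ≤ c := le_of_add_le_add_of_mul_le_mul hc hdc hsum hprod
  have hbc : b ≤ c := le_of_add_le_add_of_mul_le_mul hc hdc hsum' hprod'
  have hda : d ≤ a := le_of_mul_le_mul_of_le_of_le ha hdc hbc hprod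
  have hdb : d ≤ b := le_of_mul_le_mul_of_le_of_le hb hdc hac hprod'
  have hpow : b ^ m - d ^ m ≤ c ^ m - a ^ m :=
    pow_sub_pow_le_pow_sub_pow hd hdb hda hbc (by linarith) m
  linarith

end OrderedRing

theorem zpow_neg_add_zpow_neg {K : Type*} [Semifield K] {x y : K} (hx : x ≠ 0)
    (hy : y ≠ 0) (n : ℤ) : x ^ (-n) + y ^ (-n) = (x ^ n + y ^ n) / (x * y) ^ n := by
  rw [zpow_neg, zpow_neg, inv_add_inv (zpow_ne_zero n hx) (zpow_ne_zero n hy), mul_zpow]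

theorem zpow_sum_le_general {K : Type*} [Field K] [LinearOrder K] [IsStrictOrderedRing K]
    {a b c d : K} (ha : 0 < a) (hb : 0 < b) (hc : 0 < c) (hd : 0 < d)
    (hsum : a + b ≤ c + d) (hprod : c * d ≤ a * b) (n : ℤ) :
    a ^ n + b ^ n ≤ c ^ n + d ^ n := by
  have hpow (m : ℕ) : a ^ m + b ^ m ≤ c ^ m + d ^ m :=
    pow_add_pow_le_pow_add_pow ha.le hb.le hc.le hd.le hsum hprod m
  obtain ⟨m, rfl | rfl⟩ := n.eq_nat_or_neg
  · simpa only [zpow_natCast] using hpow m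
  · rw [zpow_neg_add_zpow_neg ha.ne' hb.ne', zpow_neg_add_zpow_neg hc.ne' hd.ne']
    simp only [zpow_natCast]
    gcongr ?_ / ?_ ^ m
    exact hpow m

theorem zpow_sum_le (a b c d : ℝ) (ha : 0 < a) (hb : 0 < b) (hc : 0 < c) (hd : 0 < d)
    (hsum : a + b ≤ c + d) (hprod : a * b ≥ c * d) (n : ℤ) :
    a ^ n + b ^ n ≤ c ^ n + d ^ n :=
  zpow_sum_le_general ha hb hc hd hsum hprod n
end

section
/- Let a, b, c, d be positive real numbers such that a + b ≤ c + d and ab ≥ cd. Then for every natural number n, aⁿ + bⁿ ≤ cⁿ + dⁿ. -/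
/-!
Put `s = a + b` and `δ = a - b`, so that `2 ^ n * (a ^ n + b ^ n) = (s + δ) ^ n + (s - δ) ^ n`.
The odd powers of `δ` cancel in the binomial expansion of the right-hand side, leaving a polynomial
in `s` and `δ ^ 2` with nonnegative coefficients, which is monotone in `s ≥ 0` and in `|δ|`.
Since `δ ^ 2 = s ^ 2 - 4 * a * b`, raising the sum and lowering the product raises both.
-/

open Finset

theorem add_pow_add_sub_pow {R : Type*} [CommRing R] (x y : R) (n : ℕ) :
    (x + y) ^ n + (x - y) ^ n =
      2 * ∑ k ∈ range (n + 1) with Even k, x ^ (n - k) * y ^ k * n.choose k := by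
  rw [add_comm x y, sub_eq_neg_add, add_pow, add_pow, ← sum_add_distrib, mul_sum, sum_filter]
  refine sum_congr rfl fun k _ ↦ ?_
  split_ifs with hk
  · rw [hk.neg_pow]
    ring
  · rw [(Nat.not_even_iff_odd.mp hk).neg_pow]
    ring

section LinearOrder

variable {R : Type*} [CommRing R] [LinearOrder R]

theorem add_pow_add_sub_pow_le_of_abs_le [IsOrderedRing R] {x y z w : R} (hx : 0 ≤ x)
    (hxz : x ≤ z) (hyw : |y| ≤ |w|) (n : ℕ) :
    (x + y) ^ n + (x - y) ^ n ≤ (z + w) ^ n + (z - w) ^ n := by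
  rw [add_pow_add_sub_pow, add_pow_add_sub_pow]
  refine mul_le_mul_of_nonneg_left (sum_le_sum fun k hk ↦ ?_) zero_le_two
  have k_even : Even k := (mem_filter.mp hk).2
  rw [← k_even.pow_abs y, ← k_even.pow_abs w]
  have hz : 0 ≤ z := hx.trans hxz
  gcongr

variable [IsStrictOrderedRing R] {a b c d : R}

theorem pow_add_pow_le_of_abs_sub_le (hab : 0 ≤ a + b) (hsum : a + b ≤ c + d)
    (hsub : |a - b| ≤ |c - d|) (n : ℕ) : a ^ n + b ^ n ≤ c ^ n + d ^ n := by
  have two_pow_mul (x y : R) :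
      2 ^ n * (x ^ n + y ^ n) = (x + y + (x - y)) ^ n + (x + y - (x - y)) ^ n := by
    rw [mul_add, ← mul_pow, ← mul_pow]
    ring
  have hmul : 2 ^ n * (a ^ n + b ^ n) ≤ 2 ^ n * (c ^ n + d ^ n) := by
    rw [two_pow_mul, two_pow_mul]
    exact add_pow_add_sub_pow_le_of_abs_le hab hsum hsub n
  exact le_of_mul_le_mul_left hmul (by positivity)

theorem abs_sub_le_abs_sub_of_add_le_of_mul_le (hab : 0 ≤ a + b) (hsum : a + b ≤ c + d)
    (hprod : c * d ≤ a * b) : |a - b| ≤ |c - d| := by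
  have hsq : (a + b) ^ 2 ≤ (c + d) ^ 2 := by gcongr
  refine sq_le_sq.mp ?_
  calc
    (a - b) ^ 2 = (a + b) ^ 2 - 4 * (a * b) := by ring
    _ ≤ (c + d) ^ 2 - 4 * (c * d) := by gcongr
    _ = (c - d) ^ 2 := by ring

theorem pow_sum_le_general (hab : 0 ≤ a + b) (hsum : a + b ≤ c + d) (hprod : c * d ≤ a * b)
    (n : ℕ) : a ^ n + b ^ n ≤ c ^ n + d ^ n :=
  pow_add_pow_le_of_abs_sub_le hab hsum
    (abs_sub_le_abs_sub_of_add_le_of_mul_le hab hsum hprod) n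

end LinearOrder

theorem pow_sum_le (a b c d : ℝ) (ha : 0 < a) (hb : 0 < b) (hc : 0 < c) (hd : 0 < d)
    (hsum : a + b ≤ c + d) (hprod : a * b ≥ c * d) (n : ℕ) :
    a ^ n + b ^ n ≤ c ^ n + d ^ n :=
  pow_sum_le_general (add_pos ha hb).le hsum hprod n
end

section
/- For all positive real numbers x and y, (√(2(x²+y²)) + √(4xy))/2 ≤ x + y. -/
theorem sqrt_add_sqrt_div_two_le_sqrt {a b : ℝ} (ha : 0 ≤ a) (hb : 0 ≤ b) :
    (√a + √b) / 2 ≤ √((a + b) / 2) := by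
  apply Real.le_sqrt_of_sq_le
  calc ((√a + √b) / 2) ^ 2
      = (√a + √b) ^ 2 / 4 := by ring
    _ ≤ 2 * (√a ^ 2 + √b ^ 2) / 4 := by gcongr; exact add_sq_le
    _ = (a + b) / 2 := by rw [Real.sq_sqrt ha, Real.sq_sqrt hb]; ring

theorem sqrt_avg_le_general {x y : ℝ} (hxy : 0 ≤ x * y) :
    (√(2 * (x ^ 2 + y ^ 2)) + √(4 * (x * y))) / 2 ≤ |x + y| :=
  calc (√(2 * (x ^ 2 + y ^ 2)) + √(4 * (x * y))) / 2
      ≤ √((2 * (x ^ 2 + y ^ 2) + 4 * (x * y)) / 2) :=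
        sqrt_add_sqrt_div_two_le_sqrt (by positivity) (by positivity)
    _ = √((x + y) ^ 2) := by congr 1; ring
    _ = |x + y| := Real.sqrt_sq_eq_abs (x + y)

theorem sqrt_avg_le (x y : ℝ) (hx : 0 < x) (hy : 0 < y) :
    (Real.sqrt (2 * (x ^ 2 + y ^ 2)) + Real.sqrt (4 * (x * y))) / 2 ≤ x + y :=
  (sqrt_avg_le_general (mul_pos hx hy).le).trans_eq (abs_of_pos (add_pos hx hy))
end

section
/- For all positive real numbers x and y, Q − G ≥ A − H, where A = (x+y)/2, G = √(xy), Q = √((x²+y²)/2), and H = 2xy/(x+y). -/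
/-!
Since `Q² + G² = (x + y)²/2`, concavity of the square root gives `Q + G ≤ x + y`. On the other
hand both `Q² - G²` and `(x + y)(A - H)` equal `(x - y)²/2`, so
`(x + y)(A - H) = (Q - G)(Q + G) ≤ (Q - G)(x + y)`.
-/

theorem sqrt_add_sqrt_le_sqrt_two_mul_add {a b : ℝ} (ha : 0 ≤ a) (hb : 0 ≤ b) :
    √a + √b ≤ √(2 * (a + b)) := by
  apply Real.le_sqrt_of_sq_le
  calc (√a + √b) ^ 2 ≤ 2 * (√a ^ 2 + √b ^ 2) := add_sq_le
    _ = 2 * (a + b) := by rw [Real.sq_sqrt ha, Real.sq_sqrt hb]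

theorem sub_le_sqrt_sub_sqrt_mul_sqrt_two_mul_add {a b : ℝ} (hb : 0 ≤ b) (hba : b ≤ a) :
    a - b ≤ (√a - √b) * √(2 * (a + b)) := by
  have ha : 0 ≤ a := hb.trans hba
  have hsub : 0 ≤ √a - √b := sub_nonneg.2 (Real.sqrt_le_sqrt hba)
  calc a - b = √a ^ 2 - √b ^ 2 := by rw [Real.sq_sqrt ha, Real.sq_sqrt hb]
    _ = (√a - √b) * (√a + √b) := by ring
    _ ≤ (√a - √b) * √(2 * (a + b)) :=
      mul_le_mul_of_nonneg_left (sqrt_add_sqrt_le_sqrt_two_mul_add ha hb) hsub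

theorem half_add_sub_two_mul_div_add {K : Type*} [Field K] [NeZero (2 : K)] {x y : K}
    (hxy : x + y ≠ 0) :
    (x + y) / 2 - 2 * x * y / (x + y) = (x - y) ^ 2 / 2 / (x + y) := by
  field_simp
  ring

theorem QG_ge_AH (x y : ℝ) (hx : 0 < x) (hy : 0 < y) :
    Real.sqrt ((x ^ 2 + y ^ 2) / 2) - Real.sqrt (x * y) ≥
      (x + y) / 2 - 2 * x * y / (x + y) := by
  have hs : 0 < x + y := add_pos hx hy
  have hGsq_le_Qsq : x * y ≤ (x ^ 2 + y ^ 2) / 2 := by linarith [two_mul_le_add_sq x y]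
  have hsqrt_add : √(2 * ((x ^ 2 + y ^ 2) / 2 + x * y)) = x + y := by
    rw [show 2 * ((x ^ 2 + y ^ 2) / 2 + x * y) = (x + y) ^ 2 by ring, Real.sqrt_sq hs.le]
  rw [ge_iff_le, half_add_sub_two_mul_div_add hs.ne', div_le_iff₀ hs]
  calc (x - y) ^ 2 / 2 = (x ^ 2 + y ^ 2) / 2 - x * y := by ring
    _ ≤ (√((x ^ 2 + y ^ 2) / 2) - √(x * y)) * √(2 * ((x ^ 2 + y ^ 2) / 2 + x * y)) :=
      sub_le_sqrt_sub_sqrt_mul_sqrt_two_mul_add (mul_pos hx hy).le hGsq_le_Qsq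
    _ = (√((x ^ 2 + y ^ 2) / 2) - √(x * y)) * (x + y) := by rw [hsqrt_add]
end

section
/- For all positive real numbers x and y, √(Q·H) ≤ √(A·G), where A = (x+y)/2, G = √(xy), Q = √((x²+y²)/2), and H = 2xy/(x+y). -/
/-!
The means satisfy `A * H = G ^ 2` and `Q ^ 2 + G ^ 2 = 2 * A ^ 2`. The second identity and
`2 * Q * G ≤ Q ^ 2 + G ^ 2` give `Q * G ≤ A ^ 2`, so `Q * H = (Q * G) * G / A ≤ A * G`.
-/

section Means

variable {x y : ℝ}

lemma harm_mean_eq_geom_mean_sq_div_arith_mean (hxy : 0 ≤ x * y) :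
    2 * x * y / (x + y) = √(x * y) ^ 2 / ((x + y) / 2) := by
  rw [Real.sq_sqrt hxy, div_div_eq_mul_div, mul_assoc, mul_comm]

lemma quadratic_mean_sq_add_geom_mean_sq (hxy : 0 ≤ x * y) :
    √((x ^ 2 + y ^ 2) / 2) ^ 2 + √(x * y) ^ 2 = 2 * ((x + y) / 2) ^ 2 := by
  rw [Real.sq_sqrt (by positivity), Real.sq_sqrt hxy]
  ring

lemma quadratic_mean_mul_geom_mean_le_arith_mean_sq (hxy : 0 ≤ x * y) :
    √((x ^ 2 + y ^ 2) / 2) * √(x * y) ≤ ((x + y) / 2) ^ 2 := by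
  linarith [two_mul_le_add_sq √((x ^ 2 + y ^ 2) / 2) √(x * y),
    quadratic_mean_sq_add_geom_mean_sq hxy]

end Means

theorem sqrt_QH_le_sqrt_AG (x y : ℝ) (hx : 0 < x) (hy : 0 < y) :
    Real.sqrt (Real.sqrt ((x ^ 2 + y ^ 2) / 2) * (2 * x * y / (x + y))) ≤
      Real.sqrt (((x + y) / 2) * Real.sqrt (x * y)) := by
  have hxy : 0 ≤ x * y := by positivity
  apply Real.sqrt_le_sqrt
  calc √((x ^ 2 + y ^ 2) / 2) * (2 * x * y / (x + y))
      = √((x ^ 2 + y ^ 2) / 2) * √(x * y) * √(x * y) / ((x + y) / 2) := by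
        rw [harm_mean_eq_geom_mean_sq_div_arith_mean hxy]
        ring
    _ ≤ ((x + y) / 2) ^ 2 * √(x * y) / ((x + y) / 2) := by
        gcongr
        exact quadratic_mean_mul_geom_mean_le_arith_mean_sq hxy
    _ = (x + y) / 2 * √(x * y) := by
        field_simp
end
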